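/- Let T be a linearly ordered set of timestamps with a distinguished least element ts0. Let W be a finite list of write operations on a single register, each write w carrying a timestamp ts(w) ∈ T with ts(w) > ts0 and a value val(w) ∈ ℤ, with all writes having pairwise distinct timestamps. Let R be a finite list of read operations, each read r carrying a timestamp ts(r) ∈ T and a return value rval(r) ∈ ℤ such that either ts(r) = ts0 and rval(r) = 0, or there exists a write w ∈ W with ts(w) = ts(r) and rval(r) = val(w). Form the sequential history S by ordering the writes in increasing order of timestamp and placing each read with ts(r) = ts0 before all writes and each read with ts(r) = ts(w) immediately after write w and before any write with larger timestamp (reads with equal timestamp ordered by an arbitrary fixed tiebreaking order). Then S is legal: in S, every read returns the value of the closest preceding write, or the initial value 0 if no write precedes it. -/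

import Mathlib

/-- An operation on a single register in the construction of the total order
`S`: it is either a read (`isRead = true`) or a write (`isRead = false`),
carries a timestamp `ts` and a value `value` (the value written by a write,
resp. the value returned by a read).  A sequential history of such operations
is represented as the list of operations in the order in which they occur
(each operation standing for its invocation immediately followed by its
matching response). -/
structure Op (T : Type) where
  isRead : Bool
  ts : T
  value : ℤ

/-- A sequential history of read/write operations on a single register is
legal if every read returns the value written by the closest preceding write,
or the initial value `0` if no write precedes it. -/
def LegalOps {T : Type} (S : List (Op T)) : Prop :=
  ∀ k : Fin S.length, (S.get k).isRead = true →
    ((∃ j : Fin S.length, j < k ∧ (S.get j).isRead = false ∧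
        (S.get j).value = (S.get k).value ∧
        ∀ l : Fin S.length, j < l → l < k → (S.get l).isRead = true) ∨
      ((S.get k).value = 0 ∧ ∀ j : Fin S.length, j < k → (S.get j).isRead = true))

/-- Let `T` be a linearly ordered set of timestamps with least
element `ts0`.  Let `W` be a finite list of writes, each with a timestamp
`> ts0` and a value, with pairwise distinct timestamps, and let `R` be a
finite list of reads, each carrying a timestamp and a return value such that
either its timestamp is `ts0` and its return value is `0`, or there is a
write `w ∈ W` with the same timestamp whose value it returns.  Form the
sequential history `S` by ordering the writes in increasing order of
timestamp, placing each read with timestamp `ts0` before all writes, and each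
read with timestamp `ts(w)` immediately after write `w` and before any write
with larger timestamp (reads with equal timestamps in an arbitrary order),
i.e. `S` is a permutation of the operations of `W` and `R` sorted by
timestamp with writes placed before reads of equal timestamp.  Then `S` is
legal: every read in `S` returns the value of the closest preceding write, or
the initial value `0` if no write precedes it. -/
theorem constructed_order_legal (T : Type) [LinearOrder T] (ts0 : T)
    (hts0 : ∀ t : T, ts0 ≤ t)
    (W R S : List (Op T))
    (hW : ∀ w ∈ W, w.isRead = false ∧ ts0 < w.ts)
    (hWdist : W.Pairwise (fun w1 w2 => w1.ts ≠ w2.ts))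
    (hR : ∀ r ∈ R, r.isRead = true ∧
      ((r.ts = ts0 ∧ r.value = 0) ∨ ∃ w ∈ W, w.ts = r.ts ∧ r.value = w.value))
    (hperm : S.Perm (W ++ R))
    (hsorted : S.Pairwise (fun a b =>
      a.ts < b.ts ∨ (a.ts = b.ts ∧ ¬(a.isRead = true ∧ b.isRead = false)))) :
    LegalOps S := by
  have hP : (W ++ R).Pairwise (fun a b : Op T =>
      a.isRead = false → b.isRead = false → a.ts ≠ b.ts) := by
    rw [List.pairwise_append]
    refine ⟨hWdist.imp (fun h _ _ => h), ?_, ?_⟩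
    · refine List.Pairwise.imp_of_mem (R := fun _ _ => True) ?_ (List.pairwise_of_forall fun _ _ => trivial)
      intro a b ha hb _ h1
      have := (hR a ha).1
      simp [h1] at this
    · intro a ha b hb _ h1
      have := (hR b hb).1
      simp [h1] at this
  have hPS : S.Pairwise (fun a b : Op T =>
      a.isRead = false → b.isRead = false → a.ts ≠ b.ts) :=
    (hperm.pairwise_iff (fun h h1 h2 h3 => h h2 h1 h3.symm)).2 hP
  rw [List.pairwise_iff_get] at hPS hsorted
  intro k hk
  have hmem : ∀ j : Fin S.length, S.get j ∈ W ∨ S.get j ∈ R := fun j =>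
    List.mem_append.1 (hperm.mem_iff.1 (List.get_mem S j))
  have hkR : S.get k ∈ R := by
    rcases hmem k with h | h
    · have := (hW _ h).1
      exact absurd (hk.symm.trans this) (by decide)
    · exact h
  rcases (hR _ hkR).2 with ⟨h0, hv⟩ | ⟨w, hw, hts, hv⟩
  · right
    refine ⟨hv, fun j hj => ?_⟩
    rcases hmem j with h | h
    · exfalso
      have h1 := (hW _ h).2
      rcases hsorted j k hj with h2 | h2
      · exact absurd (h1.trans h2) (by rw [h0]; exact lt_irrefl _)
      · rw [h2.1, h0] at h1
        exact lt_irrefl _ h1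
    · exact (hR _ h).1
  · left
    have hwS : w ∈ S := hperm.mem_iff.2 (List.mem_append_left _ hw)
    obtain ⟨j, rfl⟩ := List.mem_iff_get.1 hwS
    have hjw := (hW _ hw).1
    have hjk : j < k := by
      rcases lt_trichotomy j k with h | h | h
      · exact h
      · subst h
        exact absurd (hk.symm.trans hjw) (by decide)
      · exfalso
        rcases hsorted k j h with h2 | h2
        · rw [hts] at h2
          exact lt_irrefl _ h2
        · exact h2.2 ⟨hk, hjw⟩
    refine ⟨j, hjk, hjw, hv.symm, fun l hjl hlk => ?_⟩
    by_contra hl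
    have hl' : (S.get l).isRead = false := by simpa using hl
    have hne := hPS j l hjl hjw hl'
    have h1 : (S.get j).ts ≤ (S.get l).ts := by
      rcases hsorted j l hjl with h | h
      · exact h.le
      · exact h.1.le
    have h2 : (S.get l).ts ≤ (S.get k).ts := by
      rcases hsorted l k hlk with h | h
      · exact h.le
      · exact h.1.le
    rw [← hts] at h2
    exact hne (le_antisymm h1 h2)
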